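/- Let N ≥ 1, α, β > −1, and let z_1 < ... < z_N be the ordered zeros of the Jacobi polynomial P_N^{(α,β)}. Let S̃ be the N×N matrix with entries s̃_{j,j} = 4Σ_{l≠j}(1−z_j²)/(z_j−z_l)² + 2(α+1)(1+z_j)/(1−z_j) + 2(β+1)(1−z_j)/(1+z_j) and s̃_{i,j} = −4√((1−z_i²)(1−z_j²))/(z_i−z_j)² for i ≠ j. Then the eigenvalues of S̃ are exactly the N pairwise distinct positive numbers λ_k = 2k(2N+α+β+1−k) for k = 1, ..., N, and each eigenvalue is simple. -/

import Mathlib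

open MeasureTheory Filter Real Finset Topology

/-!
The Jacobi operator `L Q = (1 - x²) Q'' + (β - α - (α + β + 2) x) Q'` is symmetric for the weight
`(1 - x)^α (1 + x)^β` and does not raise degrees, so an orthogonal polynomial of degree `N`
satisfies `L P = -N (N + α + β + 1) P`. On the polynomials of degree less than `N`, the operator
`2 (L + N (N + α + β + 1))` is upper triangular in the basis of monomials, with diagonal entries
`2 (N (N + α + β + 1) - n (n + α + β + 1))`, `0 ≤ n < N`. In the Lagrange basis at the zeros of `P`
its matrix is computed from the differential equation for `P`, and after conjugation by a diagonal
matrix it is the matrix of the theorem. With `n = N - k` the diagonal entries become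
`2 k (2 N + α + β + 1 - k)`.
-/

section Matrix

open Matrix Polynomial

variable {n R K : Type*} [Fintype n] [DecidableEq n] [CommRing R] [Field K]

lemma charpoly_eq_of_mul_eq_mul {A B P : Matrix n n R} (hP : IsUnit P) (h : A * P = P * B) :
    A.charpoly = B.charpoly := by
  obtain ⟨U, rfl⟩ := hP
  rw [(Units.eq_mul_inv_iff_mul_eq U).2 h, coe_units_inv, charpoly_units_conj]

lemma ker_mulVecLin_sub_smul_one (A : Matrix n n R) (μ : R) :
    LinearMap.ker (A - μ • (1 : Matrix n n R)).mulVecLin =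
      Module.End.eigenspace A.mulVecLin μ := by
  ext v
  simp [sub_eq_zero]

lemma exists_mulVec_eq_smul_iff_isRoot_charpoly (A : Matrix n n K) (μ : K) :
    (∃ v, v ≠ 0 ∧ A *ᵥ v = μ • v) ↔ A.charpoly.IsRoot μ := by
  rw [← charpoly_mulVecLin, ← Module.End.hasEigenvalue_iff_isRoot_charpoly]
  constructor
  · rintro ⟨v, hv, hAv⟩
    exact Module.End.hasEigenvalue_of_hasEigenvector
      ⟨Module.End.mem_eigenspace_iff.2 (by simpa using hAv), hv⟩
  · intro hμ
    obtain ⟨v, hv⟩ := hμ.exists_hasEigenvector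
    exact ⟨v, hv.2, by simpa using hv.apply_eq_smul⟩

lemma finrank_ker_mulVecLin_sub_smul_one {A : Matrix n n K} (hA : A.charpoly.Separable)
    {μ : K} (hμ : A.charpoly.IsRoot μ) :
    Module.finrank K (LinearMap.ker (A - μ • (1 : Matrix n n K)).mulVecLin) = 1 := by
  rw [ker_mulVecLin_sub_smul_one]
  rw [← charpoly_mulVecLin] at hA hμ
  apply le_antisymm
  · exact (LinearMap.finrank_eigenspace_le _ μ).trans (rootMultiplicity_le_one_of_separable hA μ)
  · exact Submodule.one_le_finrank_iff.2 ((Module.End.hasEigenvalue_iff_isRoot_charpoly _ μ).2 hμ)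

end Matrix

section Lagrange

open Polynomial Lagrange

variable {ι K : Type*} [Field K]

lemma eq_C_leadingCoeff_mul_nodal {s : Finset ι} {v : ι → K} (hv : Set.InjOn v s) {P : K[X]}
    (hdeg : P.natDegree = #s) (hroot : ∀ i ∈ s, P.eval (v i) = 0) :
    P = C P.leadingCoeff * nodal s v := by
  rcases eq_or_ne P 0 with rfl | hP
  · simp
  have hPdeg : P.degree = #s := by rw [degree_eq_natDegree hP, hdeg]
  refine eq_of_degree_le_of_eval_index_eq s hv hPdeg.le ?_ ?_ fun i hi ↦ ?_
  · rw [degree_C_mul (leadingCoeff_ne_zero.2 hP), degree_nodal, hPdeg]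
  · simp [nodal_monic.leadingCoeff]
  · simp [hroot i hi, eval_nodal_at_node hi]

-- Over the reals, both sides are `-(log |∏ f i|)''` at `x`.
lemma derivative_sq_sub_mul_derivative_prod_div (s : Finset ι) (f : ι → K[X]) {x : K}
    (hf : ∀ i ∈ s, (f i).eval x ≠ 0) :
    ((derivative (∏ i ∈ s, f i)).eval x ^ 2 -
        (∏ i ∈ s, f i).eval x * (derivative (derivative (∏ i ∈ s, f i))).eval x) /
          (∏ i ∈ s, f i).eval x ^ 2 =
      ∑ i ∈ s, ((derivative (f i)).eval x ^ 2 -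
        (f i).eval x * (derivative (derivative (f i))).eval x) / (f i).eval x ^ 2 := by
  classical
  induction s using Finset.induction_on with
  | empty => simp
  | insert a s ha ih =>
    have hfa : (f a).eval x ≠ 0 := hf a (mem_insert_self a s)
    have hfs : ∀ i ∈ s, (f i).eval x ≠ 0 := fun i hi ↦ hf i (mem_insert_of_mem hi)
    have hprod : (∏ i ∈ s, f i).eval x ≠ 0 := by
      rw [eval_prod]
      exact prod_ne_zero_iff.2 hfs
    rw [prod_insert ha, sum_insert ha, ← ih hfs]
    simp only [derivative_mul, derivative_add, eval_add, eval_mul]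
    field_simp
    ring

variable [DecidableEq ι] {s : Finset ι} {v : ι → K} {i j : ι}

lemma X_sub_C_mul_basis (hj : j ∈ s) :
    (X - C (v j)) * Lagrange.basis s v j = C (nodalWeight s v j) * nodal s v := by
  rw [basis_eq_prod_sub_inv_mul_nodal_div hj, ← nodal_erase_eq_nodal_div hj,
    nodal_eq_mul_nodal_erase hj]
  ring

lemma eval_derivative_basis_of_ne (hv : Set.InjOn v s) (hi : i ∈ s) (hj : j ∈ s) (hij : i ≠ j) :
    (derivative (Lagrange.basis s v j)).eval (v i) =
      nodalWeight s v j / nodalWeight s v i / (v i - v j) := by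
  have hne : v i - v j ≠ 0 := sub_ne_zero.2 (hv.ne hi hj hij)
  have h := congrArg (fun Q ↦ (derivative Q).eval (v i)) (X_sub_C_mul_basis (v := v) hj)
  simp only [derivative_mul, derivative_sub, derivative_X, derivative_C, eval_add, eval_mul,
    eval_sub, eval_X, eval_C, eval_basis_of_ne hij.symm hi] at h
  rw [eq_div_iff hne, nodalWeight_eq_eval_derivative_nodal hi, div_inv_eq_mul]
  simpa [mul_comm] using h

lemma derivative_basis_sq_sub_derivative (hv : Set.InjOn v s) (hj : j ∈ s) :
    (derivative (Lagrange.basis s v j)).eval (v j) ^ 2 -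
        (derivative (derivative (Lagrange.basis s v j))).eval (v j) =
      ∑ l ∈ s.erase j, 1 / (v j - v l) ^ 2 := by
  have hne : ∀ l ∈ s.erase j, v j ≠ v l := fun l hl ↦
    hv.ne hj (mem_of_mem_erase hl) (ne_of_mem_erase hl).symm
  have hone : ∀ l ∈ s.erase j, (basisDivisor (v j) (v l)).eval (v j) = 1 := fun l hl ↦
    eval_basisDivisor_left_of_ne (hne l hl)
  have h := derivative_sq_sub_mul_derivative_prod_div (s.erase j)
    (fun l ↦ basisDivisor (v j) (v l)) (x := v j) fun l hl ↦ by simp [hone l hl]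
  rw [← Lagrange.basis, eval_basis_self hv hj, one_mul, one_pow, div_one] at h
  rw [h]
  refine sum_congr rfl fun l hl ↦ ?_
  rw [hone l hl]
  simp [basisDivisor]

end Lagrange

section Collocation

open Polynomial Lagrange Matrix

variable {K : Type*} [Field K]

/-- The collocation matrix of an operator `f` on polynomials at the nodes `z`: it sends the values
at the nodes of a polynomial `Q` of degree less than the number of nodes to those of `f Q`. -/
noncomputable def collocationMatrix {ι : Type*} [Fintype ι] [DecidableEq ι]
    (f : K[X] →ₗ[K] K[X]) (z : ι → K) : Matrix ι ι K :=
  of fun i j ↦ (f (Lagrange.basis univ z j)).eval (z i)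

lemma collocationMatrix_mulVec_eval {ι : Type*} [Fintype ι] [DecidableEq ι]
    (f : K[X] →ₗ[K] K[X]) {z : ι → K} (hz : Function.Injective z) {Q : K[X]}
    (hQ : Q.degree < Fintype.card ι) :
    collocationMatrix f z *ᵥ (fun j ↦ Q.eval (z j)) = fun i ↦ (f Q).eval (z i) := by
  ext i
  conv_rhs => rw [eq_interpolate (s := univ) hz.injOn (f := Q) hQ, interpolate_apply]
  simp [mulVec, dotProduct, collocationMatrix, ← smul_eq_C_mul, eval_finsetSum,
    mul_comm (eval _ Q)]

variable {N : ℕ} {f : K[X] →ₗ[K] K[X]} {z : Fin N → K}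

lemma collocationMatrix_mul_vandermonde (hf : ∀ n, (f (X ^ n)).natDegree ≤ n)
    (hz : Function.Injective z) :
    collocationMatrix f z * vandermonde z =
      vandermonde z * of fun m n : Fin N ↦ (f (X ^ (n : ℕ))).coeff m := by
  ext i n
  have hdeg : (X ^ (n : ℕ) : K[X]).degree < Fintype.card (Fin N) := by simp
  have hval := congrFun (collocationMatrix_mulVec_eval f hz hdeg) i
  rw [eval_eq_sum_range' ((hf n).trans_lt n.2), sum_range] at hval
  simpa [mulVec, dotProduct, mul_apply, mul_comm] using hval

theorem charpoly_collocationMatrix (hf : ∀ n, (f (X ^ n)).natDegree ≤ n)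
    (hz : Function.Injective z) :
    (collocationMatrix f z).charpoly = ∏ n ∈ range N, (X - C ((f (X ^ n)).coeff n)) := by
  have hV : IsUnit (vandermonde z) := by
    rw [isUnit_iff_isUnit_det, isUnit_iff_ne_zero]
    exact det_vandermonde_ne_zero_iff.2 hz
  rw [charpoly_eq_of_mul_eq_mul hV (collocationMatrix_mul_vandermonde hf hz),
    charpoly_of_isUpperTriangular, prod_range]
  · simp
  · exact fun m n hnm ↦ coeff_eq_zero_of_natDegree_lt ((hf n).trans_lt hnm)

end Collocation

section JacobiOperator

open Polynomial

lemma coeff_derivative_mul_X {R : Type*} [Semiring R] (Q : R[X]) (n : ℕ) :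
    (derivative Q * X).coeff n = n * Q.coeff n := by
  cases n with
  | zero => simp
  | succ n => rw [coeff_mul_X, coeff_derivative, ← Nat.cast_succ, Nat.cast_comm]

section CommRing

variable {R : Type*} [CommRing R] (α β : R)

/-- The Jacobi differential operator `Q ↦ (1 - x²) Q'' + (β - α - (α + β + 2) x) Q'`, whose
eigenfunction of degree `n` is the Jacobi polynomial. -/
noncomputable def jacobiOperator : R[X] →ₗ[R] R[X] :=
  LinearMap.mulLeft R (1 - X ^ 2) ∘ₗ derivative ∘ₗ derivative +
    LinearMap.mulLeft R (C (β - α) - C (α + β + 2) * X) ∘ₗ derivative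

lemma jacobiOperator_apply (Q : R[X]) :
    jacobiOperator α β Q = (1 - X ^ 2) * derivative (derivative Q) +
      (C (β - α) - C (α + β + 2) * X) * derivative Q :=
  rfl

lemma jacobiOperator_X_sub_C_mul (a : R) (Q : R[X]) :
    jacobiOperator α β ((X - C a) * Q) = (X - C a) * jacobiOperator α β Q +
      2 * (1 - X ^ 2) * derivative Q + (C (β - α) - C (α + β + 2) * X) * Q := by
  simp only [jacobiOperator_apply, derivative_mul, derivative_sub, derivative_add, derivative_X,
    derivative_C, sub_zero, one_mul]
  ring

lemma coeff_jacobiOperator (Q : R[X]) (n : ℕ) :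
    (jacobiOperator α β Q).coeff n = (n + 2) * (n + 1) * Q.coeff (n + 2) +
      (β - α) * (n + 1) * Q.coeff (n + 1) - n * (n + α + β + 1) * Q.coeff n := by
  have hexpand : jacobiOperator α β Q = derivative (derivative Q) + C (β - α) * derivative Q -
      derivative (derivative Q * X) * X - C (α + β + 1) * (derivative Q * X) := by
    rw [jacobiOperator_apply, derivative_mul, derivative_X, show α + β + 2 = α + β + 1 + 1 by ring,
      C_add (b := 1), C_1]
    ring
  rw [hexpand]
  simp only [coeff_add, coeff_sub, coeff_C_mul, coeff_derivative_mul_X, coeff_derivative]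
  push_cast
  ring

lemma degree_jacobiOperator_le (Q : R[X]) : (jacobiOperator α β Q).degree ≤ Q.degree := by
  refine (degree_le_iff_coeff_zero _ _).2 fun n hn ↦ ?_
  have hcoeff : ∀ m, n ≤ m → Q.coeff m = 0 := fun m hm ↦
    coeff_eq_zero_of_degree_lt (hn.trans_le (by exact_mod_cast hm))
  simp [coeff_jacobiOperator, hcoeff]

lemma degree_jacobiOperator_add_lt {Q : R[X]} (hQ : Q ≠ 0) :
    (jacobiOperator α β Q + C (Q.natDegree * (Q.natDegree + α + β + 1)) * Q).degree < Q.degree := by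
  rw [degree_eq_natDegree hQ, degree_lt_iff_coeff_zero]
  intro m hm
  have hcoeff : ∀ k, Q.natDegree < k → Q.coeff k = 0 := fun k hk ↦
    coeff_eq_zero_of_natDegree_lt hk
  rw [coeff_add, coeff_C_mul, coeff_jacobiOperator, hcoeff (m + 2) (by omega),
    hcoeff (m + 1) (by omega)]
  rcases hm.eq_or_lt with rfl | hlt
  · ring
  · simp [hcoeff m hlt]

end CommRing

section Lagrange

open Lagrange

variable {ι K : Type*} [DecidableEq ι] [Field K] {α β c : K} {s : Finset ι} {v : ι → K} {i j : ι}

lemma jacobiOperator_basis_ode (hode : jacobiOperator α β (nodal s v) = -C c * nodal s v)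
    (hj : j ∈ s) :
    (X - C (v j)) * (jacobiOperator α β (Lagrange.basis s v j) + C c * Lagrange.basis s v j) +
      2 * (1 - X ^ 2) * derivative (Lagrange.basis s v j) +
        (C (β - α) - C (α + β + 2) * X) * Lagrange.basis s v j = 0 := by
  have hmul := X_sub_C_mul_basis (v := v) hj
  have hop := jacobiOperator_X_sub_C_mul α β (v j) (Lagrange.basis s v j)
  rw [hmul, ← smul_eq_C_mul, map_smul, hode, smul_eq_C_mul] at hop
  linear_combination -hop + C c * hmul

lemma eval_jacobiOperator_basis_of_ne (hv : Set.InjOn v s)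
    (hode : jacobiOperator α β (nodal s v) = -C c * nodal s v) (hi : i ∈ s) (hj : j ∈ s)
    (hij : i ≠ j) :
    (jacobiOperator α β (Lagrange.basis s v j)).eval (v i) =
      -2 * (1 - v i ^ 2) / (v i - v j) ^ 2 * (nodalWeight s v j / nodalWeight s v i) := by
  have hne : v i - v j ≠ 0 := sub_ne_zero.2 (hv.ne hi hj hij)
  have h := congrArg (eval (v i)) (jacobiOperator_basis_ode hode hj)
  simp only [eval_add, eval_mul, eval_sub, eval_X, eval_C, eval_one, eval_pow, eval_ofNat,
    eval_zero, eval_basis_of_ne hij.symm hi, eval_derivative_basis_of_ne hv hi hj hij] at h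
  generalize nodalWeight s v j / nodalWeight s v i = w at h ⊢
  field_simp at h ⊢
  linear_combination h

lemma eval_jacobiOperator_basis_self (hv : Set.InjOn v s)
    (hode : jacobiOperator α β (nodal s v) = -C c * nodal s v) (hj : j ∈ s)
    (hsub : 1 - v j ≠ 0) (hadd : 1 + v j ≠ 0) :
    (jacobiOperator α β (Lagrange.basis s v j)).eval (v j) + c =
      2 * ∑ l ∈ s.erase j, (1 - v j ^ 2) / (v j - v l) ^ 2 +
        (α + 1) * ((1 + v j) / (1 - v j)) + (β + 1) * ((1 - v j) / (1 + v j)) := by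
  have hself := eval_basis_self hv hj
  have hbasis := jacobiOperator_basis_ode hode hj
  have hfirst : 2 * (1 - v j ^ 2) * (derivative (Lagrange.basis s v j)).eval (v j) +
      (β - α - (α + β + 2) * v j) = 0 := by
    simpa [hself] using congrArg (eval (v j)) hbasis
  have hsecond : (jacobiOperator α β (Lagrange.basis s v j)).eval (v j) + c =
      4 * v j * (derivative (Lagrange.basis s v j)).eval (v j) -
        2 * (1 - v j ^ 2) * (derivative (derivative (Lagrange.basis s v j))).eval (v j) +
          (α + β + 2) - (β - α - (α + β + 2) * v j) *
            (derivative (Lagrange.basis s v j)).eval (v j) := by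
    have h := congrArg (fun Q ↦ (derivative Q).eval (v j)) hbasis
    simp only [derivative_add, derivative_sub, derivative_mul, derivative_X, derivative_C,
      derivative_one, derivative_ofNat, derivative_X_sq, derivative_zero, eval_add, eval_sub,
      eval_mul, eval_X, eval_C, eval_one, eval_pow, eval_ofNat, eval_zero, hself] at h
    linear_combination h
  simp_rw [div_eq_mul_one_div (1 - v j ^ 2), ← mul_sum]
  rw [← derivative_basis_sq_sub_derivative hv hj]
  field_simp
  linear_combination (1 - v j ^ 2) * hsecond +
    (2 * v j - (1 - v j ^ 2) * (derivative (Lagrange.basis s v j)).eval (v j)) * hfirst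

theorem charpoly_collocationMatrix_jacobiOperator {N : ℕ} {z : Fin N → K}
    (hz : Function.Injective z) :
    (collocationMatrix ((2 : K) • (jacobiOperator α β + c • LinearMap.id)) z).charpoly =
      ∏ n ∈ range N, (X - C (2 * (c - n * (n + α + β + 1)))) := by
  rw [charpoly_collocationMatrix (fun n ↦ ?_) hz]
  · refine prod_congr rfl fun n _ ↦ ?_
    congr 2
    simp only [smul_add, LinearMap.add_apply, LinearMap.smul_apply, LinearMap.id_coe, id_eq,
      coeff_add, coeff_smul, coeff_jacobiOperator, coeff_X_pow, Nat.add_eq_left,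
      OfNat.ofNat_ne_zero, ↓reduceIte, mul_zero, one_ne_zero, add_zero, mul_one, zero_sub,
      smul_eq_mul, mul_neg]
    ring
  · have hjac : (jacobiOperator α β (X ^ n)).natDegree ≤ n := by
      simpa using natDegree_le_natDegree (degree_jacobiOperator_le α β (X ^ n))
    exact (natDegree_smul_le _ _).trans (natDegree_add_le_of_degree_le hjac
      ((natDegree_smul_le _ _).trans (natDegree_X_pow_le n)))

end Lagrange

end JacobiOperator

section Orthogonality

open Polynomial

/-- The weight for which the Jacobi polynomials are orthogonal on `(-1, 1)`. -/
noncomputable def jacobiWeight (α β x : ℝ) : ℝ :=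
  (1 - x) ^ α * (1 + x) ^ β

/-- The integral of a polynomial over `(-1, 1)` against the Jacobi weight. -/
noncomputable def jacobiIntegral (α β : ℝ) (Q : ℝ[X]) : ℝ :=
  ∫ x in (-1 : ℝ)..1, Q.eval x * jacobiWeight α β x

variable {α β : ℝ}

lemma jacobiWeight_pos {x : ℝ} (hx : x ∈ Set.Ioo (-1 : ℝ) 1) : 0 < jacobiWeight α β x :=
  mul_pos (rpow_pos_of_pos (by linarith [hx.2]) α) (rpow_pos_of_pos (by linarith [hx.1]) β)

lemma jacobiWeight_add_one {x : ℝ} (hx : x ∈ Set.Ioo (-1 : ℝ) 1) :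
    jacobiWeight (α + 1) (β + 1) x = (1 - x ^ 2) * jacobiWeight α β x := by
  rw [jacobiWeight, jacobiWeight, rpow_add_one (by linarith [hx.2]),
    rpow_add_one (by linarith [hx.1])]
  ring

lemma hasDerivAt_jacobiWeight_add_one {x : ℝ} (hx : x ∈ Set.Ioo (-1 : ℝ) 1) :
    HasDerivAt (jacobiWeight (α + 1) (β + 1))
      ((β - α - (α + β + 2) * x) * jacobiWeight α β x) x := by
  have hsub : 1 - x ≠ 0 := by linarith [hx.2]
  have hadd : 1 + x ≠ 0 := by linarith [hx.1]
  have hl := ((hasDerivAt_id x).const_sub 1).rpow_const (p := α + 1) (Or.inl hsub)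
  have hr := ((hasDerivAt_id x).const_add 1).rpow_const (p := β + 1) (Or.inl hadd)
  refine (hl.mul hr).congr_deriv ?_
  simp only [id, add_sub_cancel_right, jacobiWeight, rpow_add_one hsub, rpow_add_one hadd]
  ring

lemma continuous_jacobiWeight_add_one (hα : -1 < α) (hβ : -1 < β) :
    Continuous (jacobiWeight (α + 1) (β + 1)) :=
  ((continuous_const.sub continuous_id).rpow_const fun _ ↦ Or.inr (by linarith)).mul
    ((continuous_const.add continuous_id).rpow_const fun _ ↦ Or.inr (by linarith))

lemma intervalIntegrable_jacobiWeight (hα : -1 < α) (hβ : -1 < β) :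
    IntervalIntegrable (jacobiWeight α β) volume (-1) 1 := by
  have hl : IntervalIntegrable (fun x : ℝ ↦ (1 + x) ^ β) volume (-1) 0 := by
    simpa using (intervalIntegral.intervalIntegrable_rpow' (a := 0) (b := 1) hβ).comp_add_left 1
  have hr : IntervalIntegrable (fun x : ℝ ↦ (1 - x) ^ α) volume 0 1 := by
    simpa using (intervalIntegral.intervalIntegrable_rpow' (a := 1) (b := 0) hα).comp_sub_left 1
  refine IntervalIntegrable.trans (b := 0) (hl.continuousOn_mul ?_) (hr.mul_continuousOn ?_)
  all_goals
    intro x hx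
    rw [Set.uIcc_of_le (by norm_num)] at hx
    refine (ContinuousAt.rpow_const (by fun_prop) (Or.inl ?_)).continuousWithinAt
    linarith [hx.1, hx.2]

lemma intervalIntegrable_eval_mul_jacobiWeight (hα : -1 < α) (hβ : -1 < β) (Q : ℝ[X]) :
    IntervalIntegrable (fun x ↦ Q.eval x * jacobiWeight α β x) volume (-1) 1 :=
  (intervalIntegrable_jacobiWeight hα hβ).continuousOn_mul Q.continuous.continuousOn

lemma jacobiIntegral_add (hα : -1 < α) (hβ : -1 < β) (P Q : ℝ[X]) :
    jacobiIntegral α β (P + Q) = jacobiIntegral α β P + jacobiIntegral α β Q := by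
  simp only [jacobiIntegral, eval_add, add_mul]
  exact intervalIntegral.integral_add (intervalIntegrable_eval_mul_jacobiWeight hα hβ P)
    (intervalIntegrable_eval_mul_jacobiWeight hα hβ Q)

lemma jacobiIntegral_C_mul (c : ℝ) (Q : ℝ[X]) :
    jacobiIntegral α β (C c * Q) = c * jacobiIntegral α β Q := by
  simp only [jacobiIntegral, eval_C_mul, mul_assoc, intervalIntegral.integral_const_mul]

lemma jacobiIntegral_eq_setIntegral (Q : ℝ[X]) :
    jacobiIntegral α β Q = ∫ x in Set.Ioo (-1 : ℝ) 1, Q.eval x * jacobiWeight α β x := by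
  rw [jacobiIntegral, intervalIntegral.integral_of_le (by norm_num), integral_Ioc_eq_integral_Ioo]

lemma jacobiIntegral_mul_self_pos (hα : -1 < α) (hβ : -1 < β) {Q : ℝ[X]} (hQ : Q ≠ 0) :
    0 < jacobiIntegral α β (Q * Q) := by
  have hnonneg : ∀ x ∈ Set.Ioo (-1 : ℝ) 1, 0 ≤ (Q * Q).eval x * jacobiWeight α β x := fun x hx ↦ by
    rw [eval_mul]
    exact mul_nonneg (mul_self_nonneg _) (jacobiWeight_pos hx).le
  have hsupport : Set.Ioo (-1 : ℝ) 1 \ Q.roots.toFinset ⊆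
      Function.support (fun x ↦ (Q * Q).eval x * jacobiWeight α β x) ∩ Set.Ioo (-1) 1 := by
    rintro x ⟨hx, hroot⟩
    have heval : Q.eval x ≠ 0 := by simpa [hQ] using hroot
    exact ⟨by simp [heval, (jacobiWeight_pos hx).ne'], hx⟩
  rw [jacobiIntegral_eq_setIntegral, setIntegral_pos_iff_support_of_nonneg_ae
    ((ae_restrict_iff' measurableSet_Ioo).2 (ae_of_all _ hnonneg))
    ((intervalIntegrable_iff_integrableOn_Ioo_of_le (by norm_num)).1
      (intervalIntegrable_eval_mul_jacobiWeight hα hβ _))]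
  refine lt_of_lt_of_le ?_ (measure_mono hsupport)
  rw [measure_sdiff_null (Q.roots.toFinset.finite_toSet.measure_zero _)]
  simp

-- `(1 - x²) w (P' Q - P Q')` has derivative `w (L P · Q - P · L Q)` and vanishes at `±1`.
lemma jacobiIntegral_wronskian (hα : -1 < α) (hβ : -1 < β) (P Q : ℝ[X]) :
    jacobiIntegral α β (jacobiOperator α β P * Q - P * jacobiOperator α β Q) = 0 := by
  have hderiv : ∀ x ∈ Set.Ioo (-1 : ℝ) 1, HasDerivAt
      (fun x ↦ jacobiWeight (α + 1) (β + 1) x * (derivative P * Q - P * derivative Q).eval x)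
      ((jacobiOperator α β P * Q - P * jacobiOperator α β Q).eval x * jacobiWeight α β x) x := by
    intro x hx
    refine ((hasDerivAt_jacobiWeight_add_one hx).mul
      ((derivative P * Q - P * derivative Q).hasDerivAt x)).congr_deriv ?_
    simp only [eval_sub, eval_mul, jacobiWeight_add_one hx, derivative_mul, eval_add,
      jacobiOperator_apply, map_sub, map_add, eval_one, eval_pow, eval_X, eval_C]
    ring
  have hα' : α + 1 ≠ 0 := by linarith
  have hβ' : β + 1 ≠ 0 := by linarith
  rw [jacobiIntegral, intervalIntegral.integral_eq_sub_of_hasDerivAt_of_le (by norm_num)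
    ((continuous_jacobiWeight_add_one hα hβ).mul (Polynomial.continuous _)).continuousOn hderiv
    (intervalIntegrable_eval_mul_jacobiWeight hα hβ _)]
  simp [jacobiWeight, zero_rpow hα', zero_rpow hβ']

lemma jacobiIntegral_jacobiOperator_mul (hα : -1 < α) (hβ : -1 < β) (P Q : ℝ[X]) :
    jacobiIntegral α β (jacobiOperator α β P * Q) =
      jacobiIntegral α β (P * jacobiOperator α β Q) := by
  rw [← sub_add_cancel (jacobiOperator α β P * Q) (P * jacobiOperator α β Q),
    jacobiIntegral_add hα hβ, jacobiIntegral_wronskian hα hβ, zero_add]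

theorem jacobiOperator_eq_of_orthogonal (hα : -1 < α) (hβ : -1 < β) {P : ℝ[X]}
    (horth : ∀ Q : ℝ[X], Q.degree < P.degree → jacobiIntegral α β (P * Q) = 0) :
    jacobiOperator α β P = -C (P.natDegree * (P.natDegree + α + β + 1)) * P := by
  rcases eq_or_ne P 0 with rfl | hP
  · simp
  set R := jacobiOperator α β P + C (P.natDegree * (P.natDegree + α + β + 1)) * P with hR
  have hRdeg : R.degree < P.degree := degree_jacobiOperator_add_lt α β hP
  suffices R = 0 by linear_combination this
  by_contra hR0
  refine (jacobiIntegral_mul_self_pos hα hβ hR0).ne' ?_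
  calc jacobiIntegral α β (R * R)
      = jacobiIntegral α β (P * jacobiOperator α β R) +
          P.natDegree * (P.natDegree + α + β + 1) * jacobiIntegral α β (P * R) := by
        conv_lhs => rw [hR, add_mul, ← hR]
        rw [jacobiIntegral_add hα hβ, jacobiIntegral_jacobiOperator_mul hα hβ, mul_assoc,
          jacobiIntegral_C_mul]
    _ = 0 := by
        rw [horth _ ((degree_jacobiOperator_le α β R).trans_lt hRdeg), horth R hRdeg, mul_zero,
          add_zero]

theorem jacobiOperator_nodal_of_orthogonal (hα : -1 < α) (hβ : -1 < β) {P : ℝ[X]} (hP : P ≠ 0)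
    (horth : ∀ Q : ℝ[X], Q.degree < P.degree → jacobiIntegral α β (P * Q) = 0) {ι : Type*}
    {s : Finset ι} {v : ι → ℝ} (hv : Set.InjOn v s) (hdeg : P.natDegree = #s)
    (hroot : ∀ i ∈ s, P.eval (v i) = 0) :
    jacobiOperator α β (Lagrange.nodal s v) =
      -C (#s * (#s + α + β + 1) : ℝ) * Lagrange.nodal s v := by
  have hode := jacobiOperator_eq_of_orthogonal hα hβ horth
  rw [hdeg, eq_C_leadingCoeff_mul_nodal hv hdeg hroot, ← smul_eq_C_mul, map_smul,
    mul_smul_comm] at hode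
  exact smul_right_injective _ (leadingCoeff_ne_zero.2 hP) hode

end Orthogonality

section TrigJacobiMatrix

open Polynomial Lagrange Matrix

/-- The matrix `S̃` of the theorem for arbitrary nodes `z`. -/
noncomputable def trigJacobiMatrix {ι : Type*} [Fintype ι] [DecidableEq ι] (α β : ℝ) (z : ι → ℝ) :
    Matrix ι ι ℝ :=
  of fun i j ↦
    if i = j then
      4 * (∑ l ∈ univ.erase j, (1 - z j ^ 2) / (z j - z l) ^ 2) +
        2 * (α + 1) * ((1 + z j) / (1 - z j)) + 2 * (β + 1) * ((1 - z j) / (1 + z j))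
    else -4 * √((1 - z i ^ 2) * (1 - z j ^ 2)) / (z i - z j) ^ 2

/-- The eigenvalue `λ_k` of the matrix `S̃` of size `N`. -/
def trigJacobiEigenvalue (α β : ℝ) (N k : ℕ) : ℝ :=
  2 * (k : ℝ) * (2 * (N : ℝ) + α + β + 1 - (k : ℝ))

lemma one_sub_sq_pos_of_mem_Ioo {x : ℝ} (hx : x ∈ Set.Ioo (-1 : ℝ) 1) : 0 < 1 - x ^ 2 := by
  nlinarith [hx.1, hx.2]

lemma trigJacobiMatrix_mul_diagonal {ι : Type*} [Fintype ι] [DecidableEq ι] {α β c : ℝ}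
    {z : ι → ℝ} (hz : Function.Injective z) (hmem : ∀ i, z i ∈ Set.Ioo (-1 : ℝ) 1)
    (hode : jacobiOperator α β (nodal univ z) = -C c * nodal univ z) :
    trigJacobiMatrix α β z * diagonal (fun i ↦ nodalWeight univ z i / √(1 - z i ^ 2)) =
      diagonal (fun i ↦ nodalWeight univ z i / √(1 - z i ^ 2)) *
        collocationMatrix ((2 : ℝ) • (jacobiOperator α β + c • LinearMap.id)) z := by
  ext i j
  rw [mul_diagonal, diagonal_mul]
  rcases eq_or_ne i j with rfl | hij
  · have hdiag := eval_jacobiOperator_basis_self hz.injOn hode (mem_univ i)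
      (by linarith [(hmem i).2]) (by linarith [(hmem i).1])
    simp only [trigJacobiMatrix, collocationMatrix, of_apply, LinearMap.smul_apply,
      LinearMap.add_apply, LinearMap.id_apply, eval_smul, eval_add, smul_eq_mul, if_true,
      eval_basis_self hz.injOn (mem_univ i), mul_one, hdiag]
    ring
  · have hwi := nodalWeight_ne_zero hz.injOn (mem_univ i)
    have hsub : z i - z j ≠ 0 := sub_ne_zero.2 (hz.ne hij)
    have hi := one_sub_sq_pos_of_mem_Ioo (hmem i)
    have hi0 := (sqrt_pos.2 hi).ne'
    have hj0 := (sqrt_pos.2 (one_sub_sq_pos_of_mem_Ioo (hmem j))).ne'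
    simp only [trigJacobiMatrix, collocationMatrix, of_apply, LinearMap.smul_apply,
      LinearMap.add_apply, LinearMap.id_apply, eval_smul, eval_add, smul_eq_mul, if_neg hij,
      eval_basis_of_ne hij.symm (mem_univ i), mul_zero, add_zero,
      eval_jacobiOperator_basis_of_ne hz.injOn hode (mem_univ i) (mem_univ j) hij,
      sqrt_mul hi.le]
    field_simp
    linear_combination -4 * nodalWeight univ z j * sq_sqrt hi.le

variable {N : ℕ} {α β : ℝ}

theorem charpoly_trigJacobiMatrix {z : Fin N → ℝ} (hz : Function.Injective z)
    (hmem : ∀ i, z i ∈ Set.Ioo (-1 : ℝ) 1)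
    (hode : jacobiOperator α β (nodal univ z) = -C (N * (N + α + β + 1)) * nodal univ z) :
    (trigJacobiMatrix α β z).charpoly =
      ∏ k ∈ Icc 1 N, (X - C (trigJacobiEigenvalue α β N k)) := by
  have hunit : IsUnit (diagonal fun i ↦ nodalWeight univ z i / √(1 - z i ^ 2)) := by
    rw [isUnit_diagonal, Pi.isUnit_iff]
    exact fun i ↦ (div_ne_zero (nodalWeight_ne_zero hz.injOn (mem_univ i))
      (sqrt_pos.2 (one_sub_sq_pos_of_mem_Ioo (hmem i))).ne').isUnit
  rw [charpoly_eq_of_mul_eq_mul hunit (trigJacobiMatrix_mul_diagonal hz hmem hode),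
    charpoly_collocationMatrix_jacobiOperator hz]
  refine prod_nbij' (fun n ↦ N - n) (fun k ↦ N - k) ?_ ?_ ?_ ?_ fun n hn ↦ ?_
  any_goals grind
  congr 2
  rw [trigJacobiEigenvalue, Nat.cast_sub (mem_range.1 hn).le]
  ring

lemma trigJacobiEigenvalue_pos (hα : -1 < α) (hβ : -1 < β) {k : ℕ} (hk : k ∈ Icc 1 N) :
    0 < trigJacobiEigenvalue α β N k := by
  obtain ⟨h1, hN⟩ := mem_Icc.1 hk
  have h1' : (1 : ℝ) ≤ k := mod_cast h1
  have hN' : (k : ℝ) ≤ N := mod_cast hN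
  have hfactor : 0 < 2 * (N : ℝ) + α + β + 1 - (k : ℝ) := by linarith
  unfold trigJacobiEigenvalue
  positivity

lemma trigJacobiEigenvalue_injOn (hα : -1 < α) (hβ : -1 < β) :
    Set.InjOn (trigJacobiEigenvalue α β N) (Icc 1 N) := by
  intro k hk k' hk' heq
  by_contra hne
  simp only [coe_Icc, Set.mem_Icc, trigJacobiEigenvalue] at hk hk' heq
  have hle : (k : ℝ) + k' + 1 ≤ 2 * N := by norm_cast; omega
  have hfactor : 2 * (N : ℝ) + α + β + 1 - k - k' ≠ 0 := by linarith
  have hsub : (k : ℝ) - k' ≠ 0 := sub_ne_zero.2 (mod_cast hne)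
  exact mul_ne_zero hsub hfactor (by linear_combination heq / 2)

end TrigJacobiMatrix

theorem trig_jacobi_matrix_eigenvalues
    (N : ℕ) (hN : 1 ≤ N) (α β : ℝ) (hα : -1 < α) (hβ : -1 < β)
    (P : Polynomial ℝ) (hPdeg : P.natDegree = N)
    (hPorth : ∀ Q : Polynomial ℝ, Q.natDegree < N →
      ∫ x in Set.Ioo (-1 : ℝ) 1,
        P.eval x * Q.eval x * (1 - x) ^ α * (1 + x) ^ β = 0)
    (hPone : P.eval 1 = (∏ j ∈ Finset.range N, (α + 1 + j)) / (N.factorial : ℝ))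
    (z : Fin N → ℝ) (hzmono : StrictMono z)
    (hzroot : ∀ i, P.eval (z i) = 0)
    (hzmem : ∀ i, z i ∈ Set.Ioo (-1 : ℝ) 1)
    (S : Matrix (Fin N) (Fin N) ℝ)
    (hS : S = Matrix.of fun i j =>
      if i = j then
        4 * (∑ l ∈ Finset.univ.erase j, (1 - z j ^ 2) / (z j - z l) ^ 2) +
          2 * (α + 1) * ((1 + z j) / (1 - z j)) + 2 * (β + 1) * ((1 - z j) / (1 + z j))
      else -4 * Real.sqrt ((1 - z i ^ 2) * (1 - z j ^ 2)) / (z i - z j) ^ 2)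
    : (∀ k : ℕ, 1 ≤ k → k ≤ N →
        (0 : ℝ) < 2 * (k : ℝ) * (2 * (N : ℝ) + α + β + 1 - (k : ℝ))) ∧
      (∀ k k' : ℕ, 1 ≤ k → k ≤ N → 1 ≤ k' → k' ≤ N →
        2 * (k : ℝ) * (2 * (N : ℝ) + α + β + 1 - (k : ℝ)) =
          2 * (k' : ℝ) * (2 * (N : ℝ) + α + β + 1 - (k' : ℝ)) → k = k') ∧
      (∀ μ : ℝ, (∃ v : Fin N → ℝ, v ≠ 0 ∧ S.mulVec v = μ • v) ↔
        ∃ k : ℕ, 1 ≤ k ∧ k ≤ N ∧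
          μ = 2 * (k : ℝ) * (2 * (N : ℝ) + α + β + 1 - (k : ℝ))) ∧
      (∀ k : ℕ, 1 ≤ k → k ≤ N →
        Module.finrank ℝ
          (LinearMap.ker
            ((S - (2 * (k : ℝ) * (2 * (N : ℝ) + α + β + 1 - (k : ℝ))) •
              (1 : Matrix (Fin N) (Fin N) ℝ)).mulVecLin)) = 1) := by
  obtain rfl : S = trigJacobiMatrix α β z := hS
  have hinj := hzmono.injective
  have hP0 : P ≠ 0 := Polynomial.ne_zero_of_natDegree_gt (hN.trans_eq hPdeg.symm)
  have horth (Q : Polynomial ℝ) (hQ : Q.degree < P.degree) : jacobiIntegral α β (P * Q) = 0 := by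
    rcases eq_or_ne Q 0 with rfl | hQ0
    · simp [jacobiIntegral]
    · simpa [jacobiIntegral_eq_setIntegral, jacobiWeight, mul_assoc] using
        hPorth Q (hPdeg ▸ Polynomial.natDegree_lt_natDegree hQ0 hQ)
  have hode := jacobiOperator_nodal_of_orthogonal hα hβ hP0 horth (s := univ) hinj.injOn
    (by simpa using hPdeg) fun i _ ↦ hzroot i
  have hchar := charpoly_trigJacobiMatrix hinj hzmem (by simpa using hode)
  have hroot (μ : ℝ) : (trigJacobiMatrix α β z).charpoly.IsRoot μ ↔ ∃ k : ℕ, 1 ≤ k ∧ k ≤ N ∧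
      μ = 2 * (k : ℝ) * (2 * (N : ℝ) + α + β + 1 - (k : ℝ)) := by
    simp only [hchar, Polynomial.isRoot_prod, mem_Icc, Polynomial.root_X_sub_C, and_assoc,
      eq_comm (b := μ), trigJacobiEigenvalue]
  have hsep : (trigJacobiMatrix α β z).charpoly.Separable := by
    rw [hchar, Polynomial.separable_prod_X_sub_C_iff']
    exact trigJacobiEigenvalue_injOn hα hβ
  refine ⟨fun k h1 hkN ↦ trigJacobiEigenvalue_pos hα hβ (mem_Icc.2 ⟨h1, hkN⟩),
    fun k k' h1 hkN h1' hkN' ↦ trigJacobiEigenvalue_injOn hα hβ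
      (mem_Icc.2 ⟨h1, hkN⟩) (mem_Icc.2 ⟨h1', hkN'⟩), fun μ ↦ ?_, fun k h1 hkN ↦ ?_⟩
  · rw [exists_mulVec_eq_smul_iff_isRoot_charpoly, hroot]
  · exact finrank_ker_mulVecLin_sub_smul_one hsep ((hroot _).2 ⟨k, h1, hkN, rfl⟩)
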